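/- A finite ULD lattice L belongs to L(ASM), i.e. L is order-isomorphic to the configuration space of some Abelian Sandpile Model reaching a unique fixed point, if and only if the system Ω has a non-negative integer solution. -/

import Mathlib

open Classical

section CFGdefs

variable {V : Type*}

/-- Out-degree of a vertex in a directed multigraph with edge multiplicities `E`. -/
noncomputable def outDeg (E : V → V → ℕ) (v : V) : ℕ := ∑ᶠ u, E v u

/-- A vertex is a sink if all its outgoing edges are loops. -/
def IsSink (E : V → V → ℕ) (v : V) : Prop := outDeg E v = E v v

/-- A vertex is firable in configuration `c`. -/
def Firable (E : V → V → ℕ) (c : V → ℕ) (v : V) : Prop :=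
  ¬ IsSink E v ∧ outDeg E v ≤ c v

/-- The result of firing vertex `v` in configuration `c`. -/
noncomputable def fire (E : V → V → ℕ) (c : V → ℕ) (v : V) : V → ℕ :=
  fun u => if u = v then c v - outDeg E v + E v v else c u + E v u

/-- The configuration obtained by firing a list of vertices in order. -/
noncomputable def fireList (E : V → V → ℕ) : (V → ℕ) → List V → (V → ℕ)
  | c, [] => c
  | c, v :: l => fireList E (fire E c v) l

/-- A list of vertices is a valid firing sequence from `c`. -/
def ValidSeq (E : V → V → ℕ) : (V → ℕ) → List V → Prop
  | _, [] => True
  | c, v :: l => Firable E c v ∧ ValidSeq E (fire E c v) l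

/-- `c'` is reachable from `c` by a finite sequence of firings. -/
def Reaches (E : V → V → ℕ) (c c' : V → ℕ) : Prop :=
  ∃ l : List V, ValidSeq E c l ∧ fireList E c l = c'

/-- A configuration with no firable vertex. -/
def FixedPt (E : V → V → ℕ) (c : V → ℕ) : Prop := ∀ v, ¬ Firable E c v

/-- The chip firing game `CFG(G,O)` reaches a unique fixed point. -/
def ReachesUFP (E : V → V → ℕ) (O : V → ℕ) : Prop :=
  ∃ fp : V → ℕ, Reaches E O fp ∧ FixedPt E fp ∧ ∀ c, Reaches E O c → Reaches E c fp

/-- The game is simple: in every firing sequence from `O` to the fixed point,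
each vertex fires at most once. -/
def SimpleCFG (E : V → V → ℕ) (O : V → ℕ) : Prop :=
  ∀ l : List V, ValidSeq E O l → FixedPt E (fireList E O l) → l.Nodup

/-- Single firing step from `c` to `c'` by firing vertex `v`. -/
def FireStep (E : V → V → ℕ) (c : V → ℕ) (v : V) (c' : V → ℕ) : Prop :=
  Firable E c v ∧ fire E c v = c'

/-- The partial order `L` is order-isomorphic to the configuration space of
`CFG(G,O)` ordered by reachability. -/
def Generates (E : V → V → ℕ) (O : V → ℕ) (L : Type*) [PartialOrder L] : Prop :=
  ∃ f : L ≃ {c : V → ℕ // Reaches E O c},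
    ∀ a b : L, a ≤ b ↔ Reaches E (f a).val (f b).val

/-- The support graph is connected (as an undirected graph). -/
def ConnectedG (E : V → V → ℕ) : Prop :=
  ∀ u v : V, Relation.ReflTransGen (fun a b => 0 < E a b ∨ 0 < E b a) u v

/-- The support graph together with its initial data is an Abelian Sandpile Model. -/
def IsASM (E : V → V → ℕ) : Prop :=
  ConnectedG E ∧ ∃ s : V, IsSink E s ∧ (∀ v, IsSink E v → v = s) ∧
    ∀ v₁ v₂ : V, v₁ ≠ v₂ → v₁ ≠ s → v₂ ≠ s → E v₁ v₂ = E v₂ v₁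

/-- The directed multigraph has no directed cycle. -/
def AcyclicG (E : V → V → ℕ) : Prop :=
  ∀ v : V, ¬ Relation.TransGen (fun a b => 0 < E a b) v v

end CFGdefs

/-- `L` is generated by some chip firing game reaching a unique fixed point. -/
def MemLCFG (L : Type*) [PartialOrder L] : Prop :=
  ∃ (V : Type) (_ : Finite V) (E : V → V → ℕ) (O : V → ℕ),
    ReachesUFP E O ∧ Generates E O L

/-- `L` is generated by some Abelian Sandpile Model reaching a unique fixed point. -/
def MemLASM (L : Type*) [PartialOrder L] : Prop :=
  ∃ (V : Type) (_ : Finite V) (E : V → V → ℕ) (O : V → ℕ),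
    IsASM E ∧ ReachesUFP E O ∧ Generates E O L

section Latticedefs

variable {L : Type*} [Lattice L]

/-- `m` is meet-irreducible: it has exactly one upper cover. -/
def MeetIrred (m : L) : Prop := ∃! y, m ⋖ y

/-- `j` is join-irreducible: it has exactly one lower cover. -/
def JoinIrred (j : L) : Prop := ∃! y, y ⋖ j

/-- The set `M_x \ M_y` of meet-irreducibles above `x` but not above `y`. -/
def MsetDiff (x y : L) : Set L := {m | MeetIrred m ∧ x ≤ m ∧ ¬ y ≤ m}

/-- The set `M \ M_a` of meet-irreducibles not above `a`. -/
def MnotAbove (a : L) : Set L := {m | MeetIrred m ∧ ¬ a ≤ m}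

/-- `x⁺`: the join of all upper covers of `x`. -/
noncomputable def uplus [Fintype L] [OrderBot L] (x : L) : L :=
  Finset.univ.sup (fun y => if x ⋖ y then y else ⊥)

/-- `L` is upper locally distributive: for every `x ≠ ⊤` the interval `[x, x⁺]`
is isomorphic to a Boolean lattice (a hypercube). -/
def IsULD (L : Type*) [Lattice L] [Fintype L] [BoundedOrder L] : Prop :=
  ∀ x : L, x ≠ ⊤ → ∃ n : ℕ, Nonempty (↥(Set.Icc x (uplus x)) ≃o Set (Fin n))

/-- `𝔘_m`: the minimal elements of `{x : ∃ y, x ⋖ y and 𝔪(x,y) = m}`. -/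
def Uset (m : L) : Set L :=
  {x | Minimal (fun z => ∃ y, z ⋖ y ∧ MsetDiff z y = {m}) x}

/-- `𝔏_m`: the maximal elements of `{x : a ≰ x for every a ∈ 𝔘_m}`. -/
def Lset (m : L) : Set L :=
  {x | Maximal (fun z => ∀ a ∈ Uset m, ¬ a ≤ z) x}

/-- `(w, e)` is a (non-negative integer) solution of the system `E(m)`. -/
def SolvesE [OrderBot L] (m : L) (w : ℕ) (e : L → ℕ) : Prop :=
  (Uset m = {(⊥ : L)} → 1 ≤ w) ∧
  (Uset m ≠ {(⊥ : L)} →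
    (∀ a ∈ Lset m, (∑ᶠ x ∈ MnotAbove a, e x) < w) ∧
    (∀ a ∈ Uset m, w ≤ ∑ᶠ x ∈ MnotAbove a, e x))

/-- The system `E(m)` has a non-negative integer solution. -/
def HasSolE [OrderBot L] (m : L) : Prop := ∃ w e, SolvesE m w e

/-- The variable `e_{x,m}` occurs in the system `𝔈(m)`. -/
def VarOccurs [OrderBot L] (x m : L) : Prop :=
  MeetIrred m ∧ Uset m ≠ {(⊥ : L)} ∧ ∃ a ∈ Uset m ∪ Lset m, x ∈ MnotAbove a

/-- `(W, Ee)` is a non-negative integer solution of the system `Ω`. -/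
def SolvesOmega [OrderBot L] (W : L → ℕ) (Ee : L → L → ℕ) : Prop :=
  (∀ m : L, MeetIrred m → SolvesE m (W m) (fun x => Ee x m)) ∧
  (∀ m₁ m₂ : L, m₁ ≠ m₂ → VarOccurs m₁ m₂ → VarOccurs m₂ m₁ → Ee m₁ m₂ = Ee m₂ m₁)

/-- The edge relation of the directed graph `𝒢` on the meet-irreducibles. -/
def Gedge (m₁ m₂ : L) : Prop :=
  MeetIrred m₁ ∧ MeetIrred m₂ ∧ ∃ a ∈ Uset m₂, m₁ ∈ MnotAbove a

end Latticedefs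

/-- The system `Ω` has a non-negative integer solution. -/
def HasSolOmega (L : Type*) [Lattice L] [OrderBot L] : Prop :=
  ∃ W Ee, SolvesOmega (L := L) W Ee

/-- The directed graph `𝒢` on the meet-irreducibles is acyclic. -/
def GAcyclic (L : Type*) [Lattice L] : Prop :=
  ∀ m : L, ¬ Relation.TransGen (Gedge (L := L)) m m

/-!
Shot vectors, which count how often each vertex has fired, embed the configuration space of an ASM
into `V → ℕ` as a set closed under suprema. A meet-irreducible `m` of this lattice corresponds to
a particular firing of a particular vertex `v`, and this firing is possible at `a` exactly if `v`
has already fired often enough and its neighbours have sent it enough chips. Both conditions fit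
into the single linear inequality `w ≤ ∑ e_x` of `E(m)`: take `e_{x,m}` to be the edge multiplicity
between the vertices of `x` and `m`, or a large number if these two vertices agree, so that one
missing firing of `v` outweighs all chips from its neighbours. The symmetry of the ASM away from
its sink gives the equations `e_{x,m} = e_{m,x}`.

Conversely, the values `e_{x,m}` of a solution of `Ω`, made symmetric where only one of the two
variables occurs, are the edge multiplicities of a graph on the meet-irreducibles, to which a sink
is added. By upper local distributivity, passing from `a` to an upper cover adds one element to
`M \ M_a`, and the inequalities of `Ω` say that the sets of vertices that can be fired, each vertex
once, are precisely the sets `M \ M_a`.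
-/

section Lattice

variable {L : Type*} [Lattice L]

theorem mnotAbove_mono {a b : L} (hab : a ≤ b) : MnotAbove a ⊆ MnotAbove b :=
  fun _ hm => ⟨hm.1, fun hb => hm.2 (hab.trans hb)⟩

theorem mnotAbove_bot [OrderBot L] : MnotAbove (⊥ : L) = ∅ :=
  Set.eq_empty_of_forall_notMem fun _ hm => hm.2 bot_le

theorem mnotAbove_eq_union_msetDiff {a b : L} (hab : a ≤ b) :
    MnotAbove b = MsetDiff a b ∪ MnotAbove a := by
  ext m
  have : ¬ a ≤ m → ¬ b ≤ m := fun ha hb => ha (hab.trans hb)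
  simp only [MnotAbove, MsetDiff, Set.mem_union, Set.mem_ofPred_eq]
  tauto

theorem meetIrred_of_infIrred [Finite L] {m : L} (hm : InfIrred m) : MeetIrred m := by
  obtain ⟨y, hy⟩ : ∃ y, m ⋖ y := by
    obtain ⟨z, hz⟩ := not_isMax_iff.1 hm.1
    obtain ⟨y, hy, -⟩ := exists_covBy_le_of_lt hz
    exact ⟨y, hy⟩
  refine ⟨y, hy, fun z hz => by_contra fun hzy => ?_⟩
  rcases hm.2 (hz.wcovBy.inf_eq hy.wcovBy hzy) with rfl | rfl
  exacts [hz.ne rfl, hy.ne rfl]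

theorem exists_meetIrred_not_le [Finite L] [OrderTop L] {x y : L} (hyx : ¬ y ≤ x) :
    ∃ m, MeetIrred m ∧ x ≤ m ∧ ¬ y ≤ m := by
  obtain ⟨s, rfl, hs⟩ := exists_infIrred_decomposition x
  obtain ⟨m, hms, hym⟩ : ∃ m ∈ s, ¬ y ≤ m := by simpa using hyx
  exact ⟨m, meetIrred_of_infIrred (hs hms), Finset.inf_le hms, hym⟩

theorem mnotAbove_subset_mnotAbove_iff [Finite L] [OrderTop L] {a b : L} :
    MnotAbove a ⊆ MnotAbove b ↔ a ≤ b := by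
  refine ⟨fun h => by_contra fun hab => ?_, mnotAbove_mono⟩
  obtain ⟨m, hm, hbm, ham⟩ := exists_meetIrred_not_le hab
  exact (h ⟨hm, ham⟩).2 hbm

theorem MeetIrred.le_of_covBy_of_lt [IsStronglyAtomic L] {m y x : L} (hm : MeetIrred m) (hy : m ⋖ y)
    (hx : m < x) : y ≤ x := by
  obtain ⟨z, hz, hzx⟩ := exists_covBy_le_of_lt hx
  exact (hm.unique hy hz).trans_le hzx

theorem covBy_sup_of_covBy [WellFoundedGT L] [IsStronglyAtomic L] [IsWeakUpperModularLattice L]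
    {z x y : L} (hzy : z ⋖ y) (hzx : z ≤ x) (hyx : ¬ y ≤ x) : x ⋖ x ⊔ y := by
  induction z using WellFoundedGT.induction generalizing y with
  | ind z ih =>
    rcases hzx.eq_or_lt with rfl | hlt
    · rwa [sup_eq_right.2 hzy.le]
    · obtain ⟨p, hp, hpx⟩ := exists_covBy_le_of_lt hlt
      have hinf : p ⊓ y = z := hp.wcovBy.inf_eq hzy.wcovBy fun hpy => hyx (hpy ▸ hpx)
      have hpy : p ⋖ p ⊔ y :=
        covBy_sup_of_inf_covBy_of_inf_covBy_left (hinf.symm ▸ hp) (hinf.symm ▸ hzy)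
      have := ih p hp.lt hpy hpx fun hle => hyx (le_sup_right.trans hle)
      rwa [← sup_assoc, sup_eq_left.2 hpx] at this

end Lattice

section ULD

variable {L : Type*} [Lattice L] [Fintype L]

theorem le_uplus_of_covBy [OrderBot L] {x y : L} (hxy : x ⋖ y) : y ≤ uplus x := by
  have := Finset.le_sup (f := fun y => if x ⋖ y then y else ⊥) (Finset.mem_univ y)
  rwa [if_pos hxy] at this

variable [BoundedOrder L]

theorem IsULD.inf_sup_left (hL : IsULD L) {x a b c : L} (hx : x ≠ ⊤)
    (ha : a ∈ Set.Icc x (uplus x)) (hb : b ∈ Set.Icc x (uplus x)) (hc : c ∈ Set.Icc x (uplus x)) :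
    a ⊓ (b ⊔ c) = a ⊓ b ⊔ a ⊓ c := by
  obtain ⟨n, ⟨e⟩⟩ := hL x hx
  lift a to Set.Icc x (uplus x) using ha
  lift b to Set.Icc x (uplus x) using hb
  lift c to Set.Icc x (uplus x) using hc
  have h : a ⊓ (b ⊔ c) = a ⊓ b ⊔ a ⊓ c := e.injective (by
    simp only [map_inf, map_sup, _root_.inf_sup_left])
  exact congrArg Subtype.val h

theorem IsULD.inf_sup_left_of_covBy (hL : IsULD L) {x p q a : L} (hp : x ⋖ p) (hq : x ⋖ q)
    (hxa : x ≤ a) (ha : a ≤ uplus x) : a ⊓ (p ⊔ q) = a ⊓ p ⊔ a ⊓ q :=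
  hL.inf_sup_left (hp.lt.trans_le le_top).ne ⟨hxa, ha⟩ ⟨hp.le, le_uplus_of_covBy hp⟩
    ⟨hq.le, le_uplus_of_covBy hq⟩

theorem IsULD.isWeakUpperModularLattice (hL : IsULD L) : IsWeakUpperModularLattice L := by
  refine ⟨fun {p q} hp hq => ⟨left_lt_sup.2 fun hqp => hq.ne (inf_eq_right.2 hqp), ?_⟩⟩
  intro c hpc hcs
  have hxc : p ⊓ q ≤ c := hp.le.trans hpc.le
  have hc : c = p ⊔ c ⊓ q := by
    have := hL.inf_sup_left_of_covBy hp hq hxc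
      (hcs.le.trans (sup_le (le_uplus_of_covBy hp) (le_uplus_of_covBy hq)))
    rwa [inf_eq_left.2 hcs.le, inf_eq_right.2 hpc.le] at this
  rcases hq.eq_or_eq (le_inf hxc inf_le_right) inf_le_right with h | h
  · rw [h, sup_inf_self] at hc
    exact hpc.ne' hc
  · rw [h] at hc
    exact hcs.ne hc

theorem IsULD.not_le_sup_of_covBy (hL : IsULD L) {x y p q : L} (hy : x ⋖ y) (hp : x ⋖ p)
    (hq : x ⋖ q) (hyp : y ≠ p) (hyq : y ≠ q) : ¬ y ≤ p ⊔ q := by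
  intro h
  have := hL.inf_sup_left_of_covBy hp hq hy.le (le_uplus_of_covBy hy)
  rw [inf_eq_left.2 h, hy.wcovBy.inf_eq hp.wcovBy hyp, hy.wcovBy.inf_eq hq.wcovBy hyq,
    sup_idem] at this
  exact hy.ne' this

theorem IsULD.not_le_sup (hL : IsULD L) {x y p q : L} (hxy : x ⋖ y) (hxp : x ≤ p) (hxq : x ≤ q)
    (hyp : ¬ y ≤ p) (hyq : ¬ y ≤ q) : ¬ y ≤ p ⊔ q := by
  have := hL.isWeakUpperModularLattice
  induction x using WellFoundedGT.induction generalizing y p q with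
  | ind x ih =>
    rcases hxp.eq_or_lt with rfl | hxp
    · rwa [sup_eq_right.2 hxq]
    rcases hxq.eq_or_lt with rfl | hxq
    · rwa [sup_eq_left.2 hxp.le]
    obtain ⟨p', hp', hp'p⟩ := exists_covBy_le_of_lt hxp
    obtain ⟨q', hq', hq'q⟩ := exists_covBy_le_of_lt hxq
    have lift : ∀ {x' r s : L}, x ⋖ x' → x' ≤ r → x' ≤ s → ¬ y ≤ r → ¬ y ≤ s → ¬ y ≤ r ⊔ s :=
      fun hx' hr hs hyr hys h =>
        ih _ hx'.lt (covBy_sup_of_covBy hxy hx'.le fun h => hyr (h.trans hr)) hr hs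
          (fun h => hyr (le_sup_right.trans h)) (fun h => hys (le_sup_right.trans h))
          (sup_le (hr.trans le_sup_left) h)
    have hp'q' : ¬ y ≤ p' ⊔ q' := hL.not_le_sup_of_covBy hxy hp' hq'
      (fun h => hyp (h.trans_le hp'p)) (fun h => hyq (h.trans_le hq'q))
    have hpq' : ¬ y ≤ p ⊔ q' := by
      have := lift hp' hp'p le_sup_left hyp hp'q'
      rwa [← sup_assoc, sup_eq_left.2 hp'p] at this
    have := lift hq' le_sup_right hq'q hpq' hyq
    rwa [sup_assoc, sup_eq_right.2 hq'q] at this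

theorem IsULD.msetDiff_subsingleton (hL : IsULD L) {x y : L} (hxy : x ⋖ y) :
    (MsetDiff x y).Subsingleton := by
  have := hL.isWeakUpperModularLattice
  have hle : ∀ m ∈ MsetDiff x y, ∀ m' ∈ MsetDiff x y, m' ≤ m := by
    rintro m ⟨hm, hxm, hym⟩ m' ⟨-, hxm', hym'⟩
    by_contra hlt
    have hsup := hm.le_of_covBy_of_lt (covBy_sup_of_covBy hxy hxm hym) (left_lt_sup.2 hlt)
    exact hL.not_le_sup hxy hxm hxm' hym hym' (le_sup_right.trans hsup)
  exact fun m hm m' hm' => (hle m' hm' m hm).antisymm (hle m hm m' hm')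

theorem IsULD.msetDiff_eq_singleton (hL : IsULD L) {x y m : L} (hxy : x ⋖ y)
    (hm : m ∈ MsetDiff x y) : MsetDiff x y = {m} :=
  (hL.msetDiff_subsingleton hxy).eq_singleton_of_mem hm

theorem IsULD.exists_msetDiff_eq_singleton (hL : IsULD L) {x y : L} (hxy : x ⋖ y) :
    ∃ m, MsetDiff x y = {m} := by
  obtain ⟨m, hm⟩ := exists_meetIrred_not_le hxy.lt.not_ge
  exact ⟨m, hL.msetDiff_eq_singleton hxy hm⟩

end ULD

section LowerEnds

variable {L : Type*} [Lattice L]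

theorem exists_mem_uset_le [Finite L] {m z y : L} (hzy : z ⋖ y) (h : MsetDiff z y = {m}) :
    ∃ u ∈ Uset m, u ≤ z := by
  obtain ⟨u, huz, hu⟩ :=
    (Set.toFinite {z : L | ∃ y, z ⋖ y ∧ MsetDiff z y = {m}}).exists_le_minimal ⟨y, hzy, h⟩
  exact ⟨u, hu, huz⟩

theorem le_of_mem_uset {m u : L} (hu : u ∈ Uset m) : u ≤ m := by
  obtain ⟨y, -, hy⟩ := hu.1
  have hm : m ∈ MsetDiff u y := hy ▸ rfl
  exact hm.2.1

theorem exists_le_mem_lset [Finite L] {m a : L} (ha : ∀ u ∈ Uset m, ¬ u ≤ a) :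
    ∃ b ∈ Lset m, a ≤ b := by
  obtain ⟨b, hab, hb⟩ := (Set.toFinite {z : L | ∀ u ∈ Uset m, ¬ u ≤ z}).exists_le_maximal ha
  exact ⟨b, hb, hab⟩

variable [Fintype L] [BoundedOrder L]

theorem IsULD.exists_mem_uset_le_of_not_le (hL : IsULD L) {m a : L} (hm : MeetIrred m)
    (ham : ¬ a ≤ m) : ∃ u ∈ Uset m, u ≤ a := by
  obtain ⟨y, hy, hya⟩ := exists_covBy_le_of_lt (inf_lt_left.2 ham)
  have hmem : m ∈ MsetDiff (a ⊓ m) y :=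
    ⟨hm, inf_le_right, fun hym => hy.lt.not_ge (le_inf hya hym)⟩
  obtain ⟨u, hu, hua⟩ := exists_mem_uset_le hy (hL.msetDiff_eq_singleton hy hmem)
  exact ⟨u, hu, hua.trans inf_le_left⟩

theorem IsULD.le_of_mem_lset (hL : IsULD L) {m a : L} (hm : MeetIrred m) (ha : a ∈ Lset m) :
    a ≤ m := by
  by_contra ham
  obtain ⟨u, hu, hua⟩ := hL.exists_mem_uset_le_of_not_le hm ham
  exact ha.1 u hu hua

theorem IsULD.exists_covBy_msetDiff_eq (hL : IsULD L) {m u x : L} (hu : u ∈ Uset m)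
    (hux : u ≤ x) (hxm : x ≤ m) : ∃ y, x ⋖ y ∧ MsetDiff x y = {m} := by
  have := hL.isWeakUpperModularLattice
  obtain ⟨y, huy, hy⟩ := hu.1
  have hm : m ∈ MsetDiff u y := hy ▸ rfl
  have hcov := covBy_sup_of_covBy huy hux fun hyx => hm.2.2 (hyx.trans hxm)
  exact ⟨_, hcov, hL.msetDiff_eq_singleton hcov
    ⟨hm.1, hxm, fun hle => hm.2.2 (le_sup_right.trans hle)⟩⟩

theorem IsULD.mnotAbove_eq_insert (hL : IsULD L) {a b m : L} (hab : a ⋖ b)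
    (hm : m ∈ MsetDiff a b) : MnotAbove b = insert m (MnotAbove a) := by
  rw [mnotAbove_eq_union_msetDiff hab.le, hL.msetDiff_eq_singleton hab hm, Set.singleton_union]

end LowerEnds

section System

variable {L : Type*} [Lattice L]

theorem finsum_mnotAbove_mono [Finite L] (e : L → ℕ) {a b : L} (hab : a ≤ b) :
    ∑ᶠ x ∈ MnotAbove a, e x ≤ ∑ᶠ x ∈ MnotAbove b, e x := by
  simp only [finsum_mem_eq_finite_toFinset_sum e (Set.toFinite _)]
  exact Finset.sum_le_sum_of_subset (Set.Finite.toFinset_subset_toFinset.2 (mnotAbove_mono hab))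

section OrderBot

variable [OrderBot L]

theorem SolvesE.congr {m : L} {w : ℕ} {e e' : L → ℕ} (hm : MeetIrred m) (h : SolvesE m w e)
    (hee' : ∀ x, VarOccurs x m → e x = e' x) : SolvesE m w e' := by
  refine ⟨h.1, fun hU => ?_⟩
  have hsum : ∀ a ∈ Uset m ∪ Lset m, ∑ᶠ x ∈ MnotAbove a, e x = ∑ᶠ x ∈ MnotAbove a, e' x :=
    fun a ha => finsum_mem_congr rfl fun x hx => hee' x ⟨hm, hU, a, ha, hx⟩
  obtain ⟨hlt, hle⟩ := h.2 hU
  exact ⟨fun a ha => hsum a (Or.inr ha) ▸ hlt a ha, fun a ha => hsum a (Or.inl ha) ▸ hle a ha⟩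

theorem SolvesE.le_finsum_iff [Finite L] {m : L} {w : ℕ} {e : L → ℕ} (h : SolvesE m w e)
    (hU : Uset m ≠ {⊥}) (a : L) :
    w ≤ ∑ᶠ x ∈ MnotAbove a, e x ↔ ∃ u ∈ Uset m, u ≤ a := by
  obtain ⟨hlt, hle⟩ := h.2 hU
  constructor
  · intro hw
    by_contra! hno
    obtain ⟨b, hb, hab⟩ := exists_le_mem_lset hno
    exact (hw.trans (finsum_mnotAbove_mono e hab)).not_gt (hlt b hb)
  · rintro ⟨u, hu, hua⟩
    exact (hle u hu).trans (finsum_mnotAbove_mono e hua)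

/-- The multiplicities `e_{x,m}` of a solution of `Ω`, made symmetric. A multiplicity is kept if
its variable occurs in `Ω`, takes the value of its mirror image if only that one occurs, and is set
to `0` if neither does. -/
noncomputable def symmEdge (Ee : L → L → ℕ) (x m : L) : ℕ :=
  if VarOccurs x m then Ee x m else if VarOccurs m x then Ee m x else 0

theorem SolvesOmega.symmEdge_comm {W : L → ℕ} {Ee : L → L → ℕ} (h : SolvesOmega W Ee) (x m : L) :
    symmEdge Ee x m = symmEdge Ee m x := by
  rcases eq_or_ne x m with rfl | hxm
  · rfl
  · have := h.2 x m hxm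
    unfold symmEdge
    split_ifs <;> simp_all only [forall_const]

end OrderBot

theorem IsULD.symmEdge_self [Fintype L] [BoundedOrder L] (hL : IsULD L) (Ee : L → L → ℕ) (m : L) :
    symmEdge Ee m m = 0 := by
  have h : ¬ VarOccurs m m := by
    rintro ⟨hm, -, a, ha | ha, ham⟩
    · exact ham.2 (le_of_mem_uset ha)
    · exact ham.2 (hL.le_of_mem_lset hm ha)
  simp only [symmEdge, if_neg h]

/-- A symmetric system of multiplicities `g` without loops and a threshold `w` for each
meet-irreducible `m`, such that the elements `a` at which the multiplicities `g x m` over the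
meet-irreducibles `x ≱ a` sum to at least `w m` are those above some element of `𝔘_m`. -/
structure IsThresholdSystem (w : L → ℕ) (g : L → L → ℕ) : Prop where
  symm : ∀ x m, g x m = g m x
  diag : ∀ m, g m m = 0
  le_finsum_iff : ∀ m, MeetIrred m → ∀ a, w m ≤ ∑ᶠ x ∈ MnotAbove a, g x m ↔ ∃ u ∈ Uset m, u ≤ a

theorem HasSolOmega.exists_isThresholdSystem [Fintype L] [BoundedOrder L] (hL : IsULD L)
    (h : HasSolOmega L) : ∃ (w : L → ℕ) (g : L → L → ℕ), IsThresholdSystem w g := by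
  obtain ⟨W, Ee, hsol⟩ := h
  refine ⟨fun m => if Uset m = {⊥} then 0 else W m, symmEdge Ee, hsol.symmEdge_comm,
    hL.symmEdge_self Ee, fun m hm a => ?_⟩
  split_ifs with hU
  -- Here `E(m)` does not bound `w` from above, whereas `m` must be enabled from the start.
  · simp [hU]
  · exact ((hsol.1 m hm).congr hm fun x hx => by simp only [symmEdge, if_pos hx]).le_finsum_iff hU a

end System

section Reachability

variable {V : Type*} {E : V → V → ℕ}

theorem fireList_append (c : V → ℕ) (l₁ l₂ : List V) :
    fireList E c (l₁ ++ l₂) = fireList E (fireList E c l₁) l₂ := by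
  induction l₁ generalizing c with
  | nil => rfl
  | cons v _ ih => exact ih _

theorem validSeq_append {c : V → ℕ} {l₁ l₂ : List V} :
    ValidSeq E c (l₁ ++ l₂) ↔ ValidSeq E c l₁ ∧ ValidSeq E (fireList E c l₁) l₂ := by
  induction l₁ generalizing c with
  | nil => exact (iff_of_eq (true_and _)).symm
  | cons v l ih => exact (and_congr_right' ih).trans and_assoc.symm

theorem Reaches.refl (c : V → ℕ) : Reaches E c c :=
  ⟨[], trivial, rfl⟩

theorem Reaches.trans {c₁ c₂ c₃ : V → ℕ} (h₁ : Reaches E c₁ c₂) (h₂ : Reaches E c₂ c₃) :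
    Reaches E c₁ c₃ := by
  obtain ⟨l₁, hl₁, rfl⟩ := h₁
  obtain ⟨l₂, hl₂, rfl⟩ := h₂
  exact ⟨l₁ ++ l₂, validSeq_append.2 ⟨hl₁, hl₂⟩, fireList_append _ _ _⟩

theorem Firable.reaches_fire {c : V → ℕ} {v : V} (h : Firable E c v) : Reaches E c (fire E c v) :=
  ⟨[v], ⟨h, trivial⟩, rfl⟩

theorem Firable.fire_ne_self {c : V → ℕ} {v : V} (h : Firable E c v) : fire E c v ≠ c := by
  intro heq
  have hv : c v - outDeg E v + E v v = c v := by simpa only [fire, if_pos] using congr_fun heq v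
  have := h.2
  exact h.1 (by unfold IsSink; lia)

variable {L : Type*} [PartialOrder L] {C : L → V → ℕ}

theorem reaches_of_covBy_reaches [Finite L] (hcov : ∀ a b, a ⋖ b → Reaches E (C a) (C b))
    {a b : L} (hab : a ≤ b) : Reaches E (C a) (C b) := by
  have := Fintype.ofFinite L
  let _ := Fintype.toLocallyFiniteOrder (α := L)
  induction le_iff_reflTransGen_covBy.1 hab with
  | refl => exact .refl _
  | tail _ h ih => exact (ih (le_iff_reflTransGen_covBy.2 ‹_›)).trans (hcov _ _ h)

theorem exists_le_of_reaches (hfire : ∀ a v, Firable E (C a) v → ∃ b, a ≤ b ∧ C b = fire E (C a) v)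
    {a : L} {c : V → ℕ} (h : Reaches E (C a) c) : ∃ b, a ≤ b ∧ C b = c := by
  obtain ⟨l, hl, rfl⟩ := h
  induction l generalizing a with
  | nil => exact ⟨a, le_rfl, rfl⟩
  | cons v l ih =>
    obtain ⟨b, hab, hb⟩ := hfire a v hl.1
    obtain ⟨d, hbd, hd⟩ := ih (hb ▸ hl.2)
    exact ⟨d, hab.trans hbd, hd.trans (congrArg (fireList E · l) hb)⟩

theorem generates_of_reaches_iff [OrderBot L] (hC : Function.Injective C)
    (h : ∀ a c, Reaches E (C a) c ↔ ∃ b, a ≤ b ∧ C b = c) : Generates E (C ⊥) L := by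
  refine ⟨Equiv.ofBijective (fun a => ⟨C a, (h ⊥ _).2 ⟨a, bot_le, rfl⟩⟩) ⟨?_, ?_⟩, fun a b => ?_⟩
  · exact fun a b hab => hC (congrArg Subtype.val hab)
  · rintro ⟨c, hc⟩
    obtain ⟨b, -, rfl⟩ := (h ⊥ c).1 hc
    exact ⟨b, rfl⟩
  · exact ((h a (C b)).trans ⟨fun ⟨_, hd, hdb⟩ => hC hdb ▸ hd, fun hab => ⟨b, hab, rfl⟩⟩).symm

theorem reachesUFP_of_reaches_iff [BoundedOrder L]
    (h : ∀ a c, Reaches E (C a) c ↔ ∃ b, a ≤ b ∧ C b = c) : ReachesUFP E (C ⊥) := by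
  refine ⟨C ⊤, (h _ _).2 ⟨⊤, le_top, rfl⟩, fun v hv => ?_, fun c hc => ?_⟩
  · obtain ⟨b, hb, heq⟩ := (h _ _).1 hv.reaches_fire
    exact hv.fire_ne_self (heq ▸ top_le_iff.1 hb ▸ rfl)
  · obtain ⟨b, -, rfl⟩ := (h _ _).1 hc
    exact (h _ _).2 ⟨⊤, le_top, rfl⟩

end Reachability

section Sandpile

variable {I : Type*}

/-- The graph with vertices `I` and a sink `none`, with `g i j` edges from `i` to `j` and `w i + 1`
edges from `i` to the sink. -/
def sinkGraph (g : I → I → ℕ) (w : I → ℕ) : Option I → Option I → ℕ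
  | none, _ => 0
  | some i, none => w i + 1
  | some i, some j => g i j

variable {g : I → I → ℕ} {w : I → ℕ}

theorem outDeg_sinkGraph_none : outDeg (sinkGraph g w) none = 0 :=
  finsum_zero

theorem outDeg_sinkGraph_some [Fintype I] (i : I) :
    outDeg (sinkGraph g w) (some i) = w i + 1 + ∑ j, g i j := by
  rw [outDeg, finsum_eq_sum_of_fintype, Fintype.sum_option]
  rfl

theorem isSink_sinkGraph_iff [Finite I] (hdiag : ∀ i, g i i = 0) {v : Option I} :
    IsSink (sinkGraph g w) v ↔ v = none := by
  cases v with
  | none => exact iff_of_true outDeg_sinkGraph_none rfl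
  | some i =>
    have := Fintype.ofFinite I
    simp [IsSink, outDeg_sinkGraph_some, sinkGraph, hdiag]

theorem isASM_sinkGraph [Finite I] (hsymm : ∀ i j, g i j = g j i) (hdiag : ∀ i, g i i = 0) :
    IsASM (sinkGraph g w) := by
  have hsink : ∀ v, Relation.ReflTransGen
      (fun a b => 0 < sinkGraph g w a b ∨ 0 < sinkGraph g w b a) v none := by
    rintro (_ | i)
    · exact .refl
    · exact .single (.inl (Nat.succ_pos _))
  have : Std.Symm fun a b => 0 < sinkGraph g w a b ∨ 0 < sinkGraph g w b a := ⟨fun _ _ => Or.symm⟩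
  refine ⟨fun u v => (hsink u).trans ?_, none, (isSink_sinkGraph_iff hdiag).2 rfl,
    fun v => (isSink_sinkGraph_iff hdiag).1, ?_⟩
  · exact Relation.ReflTransGen.stdSymm.symm _ _ (hsink v)
  · rintro (_ | i) (_ | j) - hi hj
    · rfl
    · exact absurd rfl hi
    · exact absurd rfl hj
    · exact hsymm i j

variable [Fintype I]

/-- The configuration of `sinkGraph g w` in which every vertex of `S` has fired exactly once, when
each vertex `i` starts with just `w i` chips too few to fire. The subtraction does not truncate for
the sets `S` that can be fired. -/
noncomputable def firedConfig (g : I → I → ℕ) (w : I → ℕ) (S : Finset I) : Option I → ℕ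
  | none => ∑ i ∈ S, (w i + 1)
  | some i => if i ∈ S then ∑ j ∈ S, g j i - w i else 1 + ∑ j, g i j + ∑ j ∈ S, g j i

theorem sum_symm_le (hsymm : ∀ i j, g i j = g j i) (S : Finset I) (i : I) :
    ∑ j ∈ S, g j i ≤ ∑ j, g i j := by
  simp only [hsymm i]
  exact Finset.sum_le_univ_sum_of_nonneg fun _ => Nat.zero_le _

theorem firable_firedConfig_iff (hsymm : ∀ i j, g i j = g j i) (hdiag : ∀ i, g i i = 0)
    {S : Finset I} {v : Option I} : Firable (sinkGraph g w) (firedConfig g w S) v ↔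
      ∃ i, v = some i ∧ i ∉ S ∧ w i ≤ ∑ j ∈ S, g j i := by
  rw [Firable, isSink_sinkGraph_iff hdiag]
  cases v with
  | none => simp
  | some i =>
    have := sum_symm_le hsymm S i
    by_cases hi : i ∈ S <;>
      simp only [outDeg_sinkGraph_some, firedConfig, hi, Option.some.injEq, reduceCtorEq, if_true,
        if_false, exists_eq_left', not_true_eq_false, not_false_eq_true] <;> lia

theorem fire_firedConfig (hdiag : ∀ i, g i i = 0) {S : Finset I}
    {i : I} (hi : i ∉ S) (hw : w i ≤ ∑ j ∈ S, g j i) (hS : ∀ k ∈ S, w k ≤ ∑ j ∈ S, g j k) :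
    fire (sinkGraph g w) (firedConfig g w S) (some i) = firedConfig g w (insert i S) := by
  funext v
  rcases v with _ | k
  · simp only [fire, firedConfig, sinkGraph, reduceCtorEq, if_false, Finset.sum_insert hi]
    ring
  · rcases eq_or_ne k i with rfl | hki
    · simp only [fire, firedConfig, sinkGraph, outDeg_sinkGraph_some, if_true, if_neg hi, hdiag,
        Finset.sum_insert hi, Finset.mem_insert_self]
      lia
    · by_cases hk : k ∈ S
      · have := hS k hk
        simp only [fire, firedConfig, sinkGraph, Option.some.injEq, hki, hk, if_true, if_false,
          Finset.sum_insert hi, Finset.mem_insert, or_true]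
        lia
      · simp only [fire, firedConfig, sinkGraph, Option.some.injEq, hki, hk, if_false,
          Finset.sum_insert hi, Finset.mem_insert, or_self]
        ring

theorem firedConfig_injective (hsymm : ∀ i j, g i j = g j i) :
    Function.Injective (firedConfig g w) := by
  have hsub : ∀ S T, firedConfig g w S = firedConfig g w T → S ⊆ T := by
    intro S T h i hi
    by_contra hiT
    have hi' := congr_fun h (some i)
    simp only [firedConfig, if_pos hi, if_neg hiT] at hi'
    have := sum_symm_le hsymm S i
    lia
  exact fun S T h => (hsub S T h).antisymm (hsub T S h.symm)

/-- The sets of the family `F` are those that can be fired in `sinkGraph g w`, a vertex `i ∉ S`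
being enabled once the vertices of `S` have fired if the sum of `g j i` over `j ∈ S` reaches the
threshold `w i`. -/
structure IsFiringFamily {L : Type*} [PartialOrder L] (g : I → I → ℕ) (w : I → ℕ)
    (F : L ↪o Finset I) : Prop where
  le_sum_of_mem : ∀ a, ∀ i ∈ F a, w i ≤ ∑ j ∈ F a, g j i
  insert_mem_range : ∀ a, ∀ i ∉ F a, w i ≤ ∑ j ∈ F a, g j i → insert i (F a) ∈ Set.range F
  map_covBy : ∀ a b, a ⋖ b → F a ⋖ F b

namespace IsFiringFamily

variable {L : Type*} [PartialOrder L] {F : L ↪o Finset I}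

theorem exists_fire_eq (hF : IsFiringFamily g w F) (hsymm : ∀ i j, g i j = g j i)
    (hdiag : ∀ i, g i i = 0) {a : L} {v : Option I}
    (hv : Firable (sinkGraph g w) (firedConfig g w (F a)) v) :
    ∃ b, a ≤ b ∧ firedConfig g w (F b) = fire (sinkGraph g w) (firedConfig g w (F a)) v := by
  obtain ⟨i, rfl, hi, hw⟩ := (firable_firedConfig_iff hsymm hdiag).1 hv
  obtain ⟨b, hb⟩ := hF.insert_mem_range a i hi hw
  refine ⟨b, F.le_iff_le.1 (hb ▸ Finset.subset_insert i _), ?_⟩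
  rw [fire_firedConfig hdiag hi hw (hF.le_sum_of_mem a), hb]

theorem reaches_of_covBy (hF : IsFiringFamily g w F) (hsymm : ∀ i j, g i j = g j i)
    (hdiag : ∀ i, g i i = 0) {a b : L} (hab : a ⋖ b) :
    Reaches (sinkGraph g w) (firedConfig g w (F a)) (firedConfig g w (F b)) := by
  obtain ⟨i, hi, hib⟩ := Finset.covBy_iff_exists_insert.1 (hF.map_covBy a b hab)
  have hw : w i ≤ ∑ j ∈ F a, g j i := by
    simpa [← hib, Finset.sum_insert hi, hdiag] using
      hF.le_sum_of_mem b i (hib ▸ Finset.mem_insert_self i _)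
  rw [← hib, ← fire_firedConfig hdiag hi hw (hF.le_sum_of_mem a)]
  exact ((firable_firedConfig_iff hsymm hdiag).2 ⟨i, rfl, hi, hw⟩).reaches_fire

end IsFiringFamily

end Sandpile

theorem IsFiringFamily.memLASM {I : Type} [Finite I] {g : I → I → ℕ} {w : I → ℕ} {L : Type*}
    [PartialOrder L] [Finite L] [BoundedOrder L] {F : L ↪o Finset I}
    (hF : IsFiringFamily g w F) (hsymm : ∀ i j, g i j = g j i)
    (hdiag : ∀ i, g i i = 0) : MemLASM L := by
  have := Fintype.ofFinite I
  have hreach : ∀ a c, Reaches (sinkGraph g w) (firedConfig g w (F a)) c ↔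
      ∃ b, a ≤ b ∧ firedConfig g w (F b) = c := by
    refine fun a c => ⟨exists_le_of_reaches (C := fun a => firedConfig g w (F a))
      fun a v => hF.exists_fire_eq hsymm hdiag, ?_⟩
    rintro ⟨b, hab, rfl⟩
    exact reaches_of_covBy_reaches (C := fun a => firedConfig g w (F a))
      (fun a b => hF.reaches_of_covBy hsymm hdiag) hab
  exact ⟨Option I, inferInstance, sinkGraph g w, firedConfig g w (F ⊥),
    isASM_sinkGraph hsymm hdiag, reachesUFP_of_reaches_iff hreach,
    generates_of_reaches_iff ((firedConfig_injective hsymm).comp F.injective) hreach⟩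

section ThresholdSystem

variable {L : Type*} [Lattice L]

section Embedding

variable [Finite L] [OrderTop L] {I : Type*} [Fintype I] {φ : I ≃ {m : L // MeetIrred m}}

/-- The embedding `a ↦ M \ M_a` of `L` into the sets of meet-irreducibles, these being numbered
by `φ`. -/
noncomputable def mnotAboveEmbedding (φ : I ≃ {m : L // MeetIrred m}) : L ↪o Finset I :=
  OrderEmbedding.ofMapLEIff (fun a => Finset.univ.filter fun i => ¬ a ≤ (φ i : L)) fun a b => by
    refine Iff.trans ⟨?_, ?_⟩ mnotAbove_subset_mnotAbove_iff
    · intro h x hx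
      exact ⟨hx.1, by simpa using @h (φ.symm ⟨x, hx.1⟩) (by simpa using hx.2)⟩
    · intro h i hi
      simpa using (h ⟨(φ i).2, by simpa using hi⟩).2

theorem mem_mnotAboveEmbedding {a : L} {i : I} :
    i ∈ mnotAboveEmbedding φ a ↔ ¬ a ≤ (φ i : L) := by
  simp [mnotAboveEmbedding]

theorem image_mnotAboveEmbedding (a : L) :
    (fun i => (φ i : L)) '' (mnotAboveEmbedding φ a) = MnotAbove a := by
  ext x
  constructor
  · rintro ⟨i, hi, rfl⟩
    exact ⟨(φ i).2, mem_mnotAboveEmbedding.1 hi⟩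
  · intro hx
    exact ⟨φ.symm ⟨x, hx.1⟩, mem_mnotAboveEmbedding.2 (by simpa using hx.2), by simp⟩

theorem sum_mnotAboveEmbedding (a : L) (e : L → ℕ) :
    ∑ i ∈ mnotAboveEmbedding φ a, e (φ i) = ∑ᶠ x ∈ MnotAbove a, e x := by
  have hinj : Function.Injective fun i => (φ i : L) := Subtype.val_injective.comp φ.injective
  rw [← image_mnotAboveEmbedding (φ := φ), finsum_mem_image hinj.injOn, finsum_mem_coe_finset]

end Embedding

variable [Fintype L] [BoundedOrder L] {I : Type*} [Fintype I] {φ : I ≃ {m : L // MeetIrred m}}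

theorem IsULD.mnotAboveEmbedding_eq_insert (hL : IsULD L) {a b : L} {i : I} (hab : a ⋖ b)
    (hi : (φ i : L) ∈ MsetDiff a b) :
    mnotAboveEmbedding φ b = insert i (mnotAboveEmbedding φ a) := by
  ext j
  have h := Set.ext_iff.1 (hL.mnotAbove_eq_insert hab hi) (φ j)
  simpa [MnotAbove, (φ j).2, mem_mnotAboveEmbedding, Subtype.val_inj] using h

theorem IsThresholdSystem.isFiringFamily (hL : IsULD L) {w : L → ℕ} {g : L → L → ℕ}
    (h : IsThresholdSystem w g) :
    IsFiringFamily (fun i j => g (φ i) (φ j)) (fun i => w (φ i)) (mnotAboveEmbedding φ) := by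
  have hle : ∀ a i, w (φ i) ≤ ∑ j ∈ mnotAboveEmbedding φ a, g (φ j) (φ i) ↔
      ∃ u ∈ Uset (φ i : L), u ≤ a := fun a i => by
    rw [← h.le_finsum_iff _ (φ i).2, ← sum_mnotAboveEmbedding (φ := φ)]
  refine ⟨fun a i hi => (hle a i).2 ?_, fun a i hi hw => ?_, fun a b hab => ?_⟩
  · exact hL.exists_mem_uset_le_of_not_le (φ i).2 (mem_mnotAboveEmbedding.1 hi)
  · obtain ⟨u, hu, hua⟩ := (hle a i).1 hw
    obtain ⟨y, hay, hy⟩ :=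
      hL.exists_covBy_msetDiff_eq hu hua (not_not.1 (mt mem_mnotAboveEmbedding.2 hi))
    exact ⟨y, hL.mnotAboveEmbedding_eq_insert hay (hy ▸ rfl)⟩
  · obtain ⟨m, hm⟩ := hL.exists_msetDiff_eq_singleton hab
    have hmem : m ∈ MsetDiff a b := hm ▸ rfl
    obtain ⟨i, rfl⟩ : ∃ i, (φ i : L) = m := ⟨φ.symm ⟨m, hmem.1⟩, by simp⟩
    rw [hL.mnotAboveEmbedding_eq_insert hab hmem]
    exact Finset.covBy_insert fun hi => mem_mnotAboveEmbedding.1 hi hmem.2.1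

theorem HasSolOmega.memLASM (hL : IsULD L) (h : HasSolOmega L) : MemLASM L := by
  obtain ⟨w, g, hwg⟩ := h.exists_isThresholdSystem hL
  obtain ⟨n, ⟨φ⟩⟩ := Finite.exists_equiv_fin {m : L // MeetIrred m}
  exact (hwg.isFiringFamily (φ := φ.symm) hL).memLASM (fun i j => hwg.symm _ _) fun i => hwg.diag _

end ThresholdSystem

section ShotVectors

theorem sup_add_single_of_lt {V : Type*} {k k' : V → ℕ} {v : V} (h : k' v < k v) :
    k ⊔ (k' + Pi.single v 1) = k ⊔ k' := by
  funext u
  rcases eq_or_ne u v with rfl | hu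
  · simp only [Pi.sup_apply, Pi.add_apply, Pi.single_eq_same]
    lia
  · simp [hu]

theorem sup_add_single_of_le {V : Type*} {k k' : V → ℕ} {v : V} (h : k v ≤ k' v) :
    k ⊔ (k' + Pi.single v 1) = k ⊔ k' + Pi.single v 1 := by
  funext u
  rcases eq_or_ne u v with rfl | hu
  · simp only [Pi.sup_apply, Pi.add_apply, Pi.single_eq_same]
    lia
  · simp [hu]

variable {V : Type*}

/-- The shot vector of a firing sequence: how often each vertex is fired. -/
noncomputable def shotVector (l : List V) : V → ℕ :=
  fun v => l.count v

theorem shotVector_nil : shotVector ([] : List V) = 0 :=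
  funext fun _ => List.count_nil

theorem shotVector_append (l₁ l₂ : List V) :
    shotVector (l₁ ++ l₂) = shotVector l₁ + shotVector l₂ :=
  funext fun _ => List.count_append

theorem shotVector_singleton (v : V) : shotVector [v] = Pi.single v 1 := by
  funext u
  simp only [shotVector, List.count_singleton, Pi.single_apply, beq_iff_eq, @eq_comm _ v u]

theorem shotVector_eq_iff_perm {l₁ l₂ : List V} :
    shotVector l₁ = shotVector l₂ ↔ l₁.Perm l₂ :=
  funext_iff.trans List.perm_iff_count.symm

variable {E : V → V → ℕ} {c : V → ℕ}

theorem Firable.fire_add {v : V} (h : Firable E c v) (u : V) :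
    fire E c v u + (Pi.single v 1 : V → ℕ) u * outDeg E u = c u + E v u := by
  have := h.2
  rcases eq_or_ne u v with rfl | hu
  · simp only [fire, if_true, Pi.single_eq_same]
    lia
  · simp [fire, hu]

theorem fireList_add_shotVector [Fintype V] {l : List V} (h : ValidSeq E c l) (u : V) :
    fireList E c l u + shotVector l u * outDeg E u = c u + ∑ v, shotVector l v * E v u := by
  induction l generalizing c with
  | nil => simp [fireList, shotVector_nil]
  | cons v l ih =>
    have hcons : shotVector (v :: l) = Pi.single v 1 + shotVector l := by
      rw [← shotVector_singleton, ← shotVector_append, List.singleton_append]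
    have hsum : ∑ x, shotVector (v :: l) x * E x u = E v u + ∑ x, shotVector l x * E x u := by
      simp [hcons, add_mul, Finset.sum_add_distrib, Pi.single_apply]
    calc fireList E c (v :: l) u + shotVector (v :: l) u * outDeg E u
        = (fireList E (fire E c v) l u + shotVector l u * outDeg E u) +
            (Pi.single v 1 : V → ℕ) u * outDeg E u := by
          rw [hcons, fireList, Pi.add_apply]
          ring
      _ = (fire E c v u + (Pi.single v 1 : V → ℕ) u * outDeg E u) +
            ∑ x, shotVector l x * E x u := by
          rw [ih h.2]
          ring
      _ = c u + ∑ x, shotVector (v :: l) x * E x u := by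
          rw [h.1.fire_add, hsum, add_assoc]

theorem fireList_eq_of_shotVector_eq [Finite V] {l₁ l₂ : List V} (h₁ : ValidSeq E c l₁)
    (h₂ : ValidSeq E c l₂) (h : shotVector l₁ = shotVector l₂) :
    fireList E c l₁ = fireList E c l₂ := by
  have := Fintype.ofFinite V
  funext u
  have := (fireList_add_shotVector h₁ u).trans (h ▸ (fireList_add_shotVector h₂ u).symm)
  rwa [h, Nat.add_right_cancel_iff] at this

theorem firable_fireList_iff [Fintype V] {l : List V} (h : ValidSeq E c l) (v : V) :
    Firable E (fireList E c l) v ↔ ¬ IsSink E v ∧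
      outDeg E v * (shotVector l v + 1) ≤ c v + ∑ u, shotVector l u * E u v := by
  rw [← fireList_add_shotVector h, mul_add_one, mul_comm, add_comm, Nat.add_le_add_iff_right]
  rfl

variable [Finite V]

theorem Firable.of_shotVector_le {l l' : List V} {v : V} (h : Firable E (fireList E c l) v)
    (hl : ValidSeq E c l) (hl' : ValidSeq E c l') (hle : shotVector l ≤ shotVector l')
    (hv : shotVector l' v = shotVector l v) : Firable E (fireList E c l') v := by
  have := Fintype.ofFinite V
  rw [firable_fireList_iff hl] at h
  rw [firable_fireList_iff hl', hv]
  exact ⟨h.1, h.2.trans (by gcongr; exact hle _)⟩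

theorem exists_shotVector_append_eq_sup {l₁ l₂ : List V} (h₁ : ValidSeq E c l₁)
    (h₂ : ValidSeq E c l₂) :
    ∃ l, ValidSeq E c (l₁ ++ l) ∧ shotVector (l₁ ++ l) = shotVector l₁ ⊔ shotVector l₂ := by
  induction l₂ using List.reverseRecOn with
  | nil => exact ⟨[], by rwa [List.append_nil], by simp [shotVector_nil]⟩
  | append_singleton l₂ v ih =>
    obtain ⟨hl₂, hv⟩ := validSeq_append.1 h₂
    obtain ⟨l, hl, heq⟩ := ih hl₂
    rw [shotVector_append, shotVector_singleton]
    rcases lt_or_ge (shotVector l₂ v) (shotVector l₁ v) with hlt | hle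
    · exact ⟨l, hl, by rw [heq, sup_add_single_of_lt hlt]⟩
    · have hfire := hv.1.of_shotVector_le hl₂ hl (heq ▸ le_sup_right)
        (by rw [heq, Pi.sup_apply, sup_eq_right.2 hle])
      refine ⟨l ++ [v], ?_, ?_⟩
      · rw [← List.append_assoc]
        exact validSeq_append.2 ⟨hl, hfire, trivial⟩
      · rw [← List.append_assoc, shotVector_append, heq, shotVector_singleton,
          sup_add_single_of_le hle]

theorem shotVector_le_of_fixedPt {l₁ l₂ : List V} (h₁ : ValidSeq E c l₁) (h₂ : ValidSeq E c l₂)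
    (hfix : FixedPt E (fireList E c l₁)) : shotVector l₂ ≤ shotVector l₁ := by
  obtain ⟨_ | ⟨v, l⟩, hl, heq⟩ := exists_shotVector_append_eq_sup h₁ h₂
  · rw [List.append_nil] at heq
    exact sup_eq_left.1 heq.symm
  · exact (hfix v (validSeq_append.1 hl).2.1).elim

theorem ReachesUFP.shotVector_eq (hc : ReachesUFP E c) {l₁ l₂ : List V} (h₁ : ValidSeq E c l₁)
    (h₂ : ValidSeq E c l₂) (h : fireList E c l₁ = fireList E c l₂) :
    shotVector l₁ = shotVector l₂ := by
  obtain ⟨fp, -, hfix, hreach⟩ := hc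
  obtain ⟨l, hl, rfl⟩ := hreach _ ⟨l₁, h₁, rfl⟩
  have hl₁ := validSeq_append.2 ⟨h₁, hl⟩
  have hl₂ := validSeq_append.2 ⟨h₂, h ▸ hl⟩
  have hle₁ := shotVector_le_of_fixedPt hl₁ hl₂ (by rwa [fireList_append])
  have hle₂ := shotVector_le_of_fixedPt hl₂ hl₁ (by rwa [fireList_append, ← h])
  rw [shotVector_append, shotVector_append] at hle₁ hle₂
  exact le_antisymm (le_of_add_le_add_right hle₂) (le_of_add_le_add_right hle₁)

theorem ReachesUFP.reaches_iff_shotVector_le (hc : ReachesUFP E c) {l₁ l₂ : List V}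
    (h₁ : ValidSeq E c l₁) (h₂ : ValidSeq E c l₂) :
    Reaches E (fireList E c l₁) (fireList E c l₂) ↔ shotVector l₁ ≤ shotVector l₂ := by
  constructor
  · rintro ⟨l, hl, h⟩
    rw [← fireList_append] at h
    rw [← hc.shotVector_eq (validSeq_append.2 ⟨h₁, hl⟩) h₂ h, shotVector_append]
    exact le_self_add
  · intro hle
    obtain ⟨l, hl, heq⟩ := exists_shotVector_append_eq_sup h₁ h₂
    refine ⟨l, (validSeq_append.1 hl).2, ?_⟩
    rw [← fireList_append]
    exact fireList_eq_of_shotVector_eq hl h₂ (heq.trans (sup_eq_right.2 hle))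

end ShotVectors

section ShotVectorSet

variable {V : Type*} {E : V → V → ℕ} {c : V → ℕ}

/-- The shot vectors of the valid firing sequences from the configuration `c`. -/
def shotVectors (E : V → V → ℕ) (c : V → ℕ) : Set (V → ℕ) :=
  {k | ∃ l, ValidSeq E c l ∧ shotVector l = k}

theorem zero_mem_shotVectors : 0 ∈ shotVectors E c :=
  ⟨[], trivial, shotVector_nil⟩

theorem supClosed_shotVectors [Finite V] : SupClosed (shotVectors E c) := by
  rintro _ ⟨l₁, h₁, rfl⟩ _ ⟨l₂, h₂, rfl⟩
  obtain ⟨l, hl, heq⟩ := exists_shotVector_append_eq_sup h₁ h₂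
  exact ⟨_, hl, heq⟩

theorem exists_add_single_mem_shotVectors [Finite V] {k k' : V → ℕ} (hk : k ∈ shotVectors E c)
    (hk' : k' ∈ shotVectors E c) (hlt : k < k') :
    ∃ v, k + Pi.single v 1 ∈ shotVectors E c ∧ k + Pi.single v 1 ≤ k' := by
  obtain ⟨l₁, h₁, rfl⟩ := hk
  obtain ⟨l₂, h₂, rfl⟩ := hk'
  obtain ⟨_ | ⟨v, l⟩, hl, heq⟩ := exists_shotVector_append_eq_sup h₁ h₂
  · rw [List.append_nil, sup_eq_right.2 hlt.le] at heq
    exact (hlt.ne heq).elim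
  · rw [sup_eq_right.2 hlt.le, List.append_cons, shotVector_append] at heq
    rw [List.append_cons] at hl
    refine ⟨v, ?_⟩
    rw [← shotVector_singleton, ← shotVector_append]
    exact ⟨⟨_, (validSeq_append.1 hl).1, rfl⟩, heq ▸ le_self_add⟩

theorem add_single_mem_shotVectors_iff [Fintype V] {k : V → ℕ} (hk : k ∈ shotVectors E c) {v : V} :
    k + Pi.single v 1 ∈ shotVectors E c ↔
      ¬ IsSink E v ∧ outDeg E v * (k v + 1) ≤ c v + ∑ u, k u * E u v := by
  obtain ⟨l₁, h₁, rfl⟩ := hk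
  rw [← firable_fireList_iff h₁, ← shotVector_singleton]
  constructor
  · rintro ⟨l₂, h₂, h⟩
    obtain ⟨l, hl, heq⟩ := exists_shotVector_append_eq_sup h₁ h₂
    rw [h, sup_eq_right.2 le_self_add, shotVector_append, add_right_inj,
      shotVector_eq_iff_perm, List.perm_singleton] at heq
    subst heq
    exact (validSeq_append.1 hl).2.1
  · exact fun hv => ⟨l₁ ++ [v], validSeq_append.2 ⟨h₁, hv, trivial⟩, shotVector_append _ _⟩

end ShotVectorSet

section ShotEmbedding

variable {V : Type*} {E : V → V → ℕ} {O : V → ℕ}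

/-- `K` identifies the elements of `L` with the shot vectors of the game `CFG(G,O)`. -/
def IsShotEmbedding {L : Type*} [PartialOrder L] (E : V → V → ℕ) (O : V → ℕ)
    (K : L ↪o (V → ℕ)) : Prop :=
  Set.range K = shotVectors E O

theorem Generates.exists_isShotEmbedding [Finite V] {L : Type*} [PartialOrder L]
    (hO : ReachesUFP E O) (hL : Generates E O L) : ∃ K : L ↪o (V → ℕ), IsShotEmbedding E O K := by
  obtain ⟨f, hf⟩ := hL
  choose l hl hlf using fun a => (f a).2
  refine ⟨OrderEmbedding.ofMapLEIff (fun a => shotVector (l a)) fun a b => ?_, ?_⟩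
  · rw [hf, ← hlf, ← hlf, hO.reaches_iff_shotVector_le (hl a) (hl b)]
  · refine Set.Subset.antisymm (Set.range_subset_iff.2 fun a => ⟨l a, hl a, rfl⟩) ?_
    rintro _ ⟨l', hl', rfl⟩
    obtain ⟨a, ha⟩ := f.surjective ⟨_, l', hl', rfl⟩
    exact ⟨a, hO.shotVector_eq (hl a) hl' ((hlf a).trans (congrArg Subtype.val ha))⟩

namespace IsShotEmbedding

section PartialOrder

variable {L : Type*} [PartialOrder L] {K : L ↪o (V → ℕ)}

theorem map_mem (hK : IsShotEmbedding E O K) (a : L) : K a ∈ shotVectors E O :=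
  hK ▸ ⟨a, rfl⟩

theorem map_bot [OrderBot L] (hK : IsShotEmbedding E O K) : K ⊥ = 0 := by
  obtain ⟨a, ha⟩ := hK.ge zero_mem_shotVectors
  exact le_antisymm (ha ▸ K.monotone bot_le) zero_le

theorem covBy_iff [Finite V] (hK : IsShotEmbedding E O K) {a b : L} :
    a ⋖ b ↔ ∃ v, K b = K a + Pi.single v 1 := by
  constructor
  · intro hab
    obtain ⟨v, hmem, hle⟩ :=
      exists_add_single_mem_shotVectors (hK.map_mem a) (hK.map_mem b) (K.lt_iff_lt.2 hab.lt)
    obtain ⟨d, hd⟩ := hK.ge hmem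
    have hlt : a < d := K.lt_iff_lt.1 (hd ▸ lt_add_of_pos_right _ (Pi.single_pos.2 one_pos))
    obtain rfl := (hab.eq_or_eq hlt.le (K.le_iff_le.1 (hd ▸ hle))).resolve_left hlt.ne'
    exact ⟨v, hd⟩
  · rintro ⟨v, hv⟩
    refine CovBy.of_image K (Pi.covBy_iff.2 ⟨v, ?_, fun u hu => ?_⟩)
    · simp [hv]
    · simp [hv, hu]

end PartialOrder

theorem map_sup {L : Type*} [Lattice L] {K : L ↪o (V → ℕ)} [Finite V]
    (hK : IsShotEmbedding E O K) (a b : L) : K (a ⊔ b) = K a ⊔ K b := by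
  obtain ⟨d, hd⟩ := hK.ge (supClosed_shotVectors (hK.map_mem a) (hK.map_mem b))
  refine le_antisymm ?_ (sup_le (K.monotone le_sup_left) (K.monotone le_sup_right))
  rw [← hd, K.le_iff_le]
  exact sup_le (K.le_iff_le.1 (hd ▸ le_sup_left)) (K.le_iff_le.1 (hd ▸ le_sup_right))

end IsShotEmbedding

end ShotEmbedding

section FiringLabel

variable {V : Type*} {E : V → V → ℕ} {O : V → ℕ} {L : Type*} [Lattice L] {K : L ↪o (V → ℕ)}

/-- The vertex `v` labels `m` if `m` is the largest element up to which `v` has been fired at most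
`K m v` times. A cover `a ⋖ b` with `𝔪(a,b) = m` is then a firing of `v`. -/
def IsFiringLabel (K : L ↪o (V → ℕ)) (m : L) (v : V) : Prop :=
  ∀ x, x ≤ m ↔ K x v ≤ K m v

namespace IsShotEmbedding

theorem exists_isFiringLabel [Finite V] [Finite L] (hK : IsShotEmbedding E O K) {m : L}
    (hm : MeetIrred m) : ∃ v, ¬ IsSink E v ∧ IsFiringLabel K m v := by
  have := Fintype.ofFinite V
  obtain ⟨y, hy⟩ := hm.exists
  obtain ⟨v, hv⟩ := hK.covBy_iff.1 hy
  have hmem : K m + Pi.single v 1 ∈ shotVectors E O := hv ▸ hK.map_mem y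
  refine ⟨v, ((add_single_mem_shotVectors_iff (hK.map_mem m)).1 hmem).1,
    fun x => ⟨fun hxm => K.monotone hxm v, fun hxv => ?_⟩⟩
  by_contra hxm
  have hle := K.monotone (hm.le_of_covBy_of_lt hy (left_lt_sup.2 hxm)) v
  rw [hv, hK.map_sup, Pi.sup_apply, sup_eq_left.2 hxv, Pi.add_apply, Pi.single_eq_same] at hle
  exact Nat.not_succ_le_self _ hle

theorem map_eq_of_covBy [Finite V] (hK : IsShotEmbedding E O K) {a b m : L} {v : V}
    (hv : IsFiringLabel K m v) (hab : a ⋖ b) (hm : m ∈ MsetDiff a b) :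
    K b = K a + Pi.single v 1 ∧ K a v = K m v := by
  obtain ⟨u, hu⟩ := hK.covBy_iff.1 hab
  have ha : K a v ≤ K m v := (hv a).1 hm.2.1
  have hb : K m v < K b v := not_le.1 (mt (hv b).2 hm.2.2)
  obtain rfl : v = u := by
    by_contra hvu
    rw [hu, Pi.add_apply, Pi.single_eq_of_ne hvu] at hb
    exact ha.not_gt hb
  rw [hu, Pi.add_apply, Pi.single_eq_same] at hb
  exact ⟨hu, ha.antisymm (Nat.lt_succ_iff.1 hb)⟩

variable [Fintype L] [BoundedOrder L]

theorem exists_covBy_msetDiff_eq_iff [Fintype V] (hK : IsShotEmbedding E O K) (hL : IsULD L)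
    {m : L} (hm : MeetIrred m) {v : V} (hsink : ¬ IsSink E v) (hv : IsFiringLabel K m v) (a : L) :
    (∃ b, a ⋖ b ∧ MsetDiff a b = {m}) ↔
      K a v = K m v ∧ outDeg E v * (K m v + 1) ≤ O v + ∑ u, K a u * E u v := by
  have hfire := add_single_mem_shotVectors_iff (hK.map_mem a) (v := v)
  constructor
  · rintro ⟨b, hab, h⟩
    obtain ⟨hb, ha⟩ := hK.map_eq_of_covBy hv hab (h ▸ rfl)
    exact ⟨ha, ha ▸ (hfire.1 (hb ▸ hK.map_mem b)).2⟩
  · rintro ⟨ha, hle⟩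
    obtain ⟨b, hb⟩ := hK.ge (hfire.2 ⟨hsink, ha ▸ hle⟩)
    have hab := hK.covBy_iff.2 ⟨v, hb⟩
    refine ⟨b, hab, hL.msetDiff_eq_singleton hab ⟨hm, (hv a).2 ha.le, fun hbm => ?_⟩⟩
    have := (hv b).1 hbm
    rw [hb, Pi.add_apply, Pi.single_eq_same, ha] at this
    exact Nat.not_succ_le_self _ this

theorem finsum_mnotAbove [Fintype V] (hK : IsShotEmbedding E O K) (hL : IsULD L) {lab : L → V}
    (hlab : ∀ m, MeetIrred m → IsFiringLabel K m (lab m)) (g : V → ℕ) (a : L) :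
    ∑ᶠ x ∈ MnotAbove a, g (lab x) = ∑ u, K a u * g u := by
  induction a using WellFoundedLT.induction with
  | ind a ih =>
    rcases eq_or_ne a ⊥ with rfl | ha
    · simp [mnotAbove_bot, hK.map_bot]
    · obtain ⟨b, -, hba⟩ := exists_le_covBy_of_lt (bot_lt_iff_ne_bot.2 ha)
      obtain ⟨m, h⟩ := hL.exists_msetDiff_eq_singleton hba
      have hm : m ∈ MsetDiff b a := h ▸ rfl
      rw [hL.mnotAbove_eq_insert hba hm, finsum_mem_insert _ (fun hmb => hmb.2 hm.2.1)
        (Set.toFinite _), ih b hba.lt, (hK.map_eq_of_covBy (hlab m hm.1) hba hm).1]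
      simp [add_mul, Finset.sum_add_distrib, Pi.single_apply, add_comm]

end IsShotEmbedding

end FiringLabel

section SandpileSolution

theorem solvesE_of_le_finsum_iff {L : Type*} [Lattice L] [Fintype L] [BoundedOrder L]
    (hL : IsULD L) {m : L} (hm : MeetIrred m) (hU : Uset m ≠ {⊥}) {w : ℕ} {e : L → ℕ}
    (h : ∀ a ≤ m, w ≤ ∑ᶠ x ∈ MnotAbove a, e x ↔ ∃ b, a ⋖ b ∧ MsetDiff a b = {m}) :
    SolvesE m w e := by
  refine ⟨fun hbot => absurd hbot hU, fun _ => ⟨fun a ha => ?_, fun a ha => ?_⟩⟩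
  · by_contra! hle
    obtain ⟨b, hab, hb⟩ := (h a (hL.le_of_mem_lset hm ha)).1 hle
    obtain ⟨u, hu, hua⟩ := exists_mem_uset_le hab hb
    exact ha.1 u hu hua
  · exact (h a (le_of_mem_uset ha)).2 ha.1

theorem mul_add_tsub_le_iff {j k C R D B : ℕ} (hR : R < C) (hjk : j ≤ k) :
    k * C + (D - B) ≤ j * C + R ↔ j = k ∧ D ≤ B + R := by
  rcases hjk.eq_or_lt with rfl | hlt
  · simp only [true_and]
    lia
  · have : (j + 1) * C ≤ k * C := Nat.mul_le_mul_right C hlt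
    rw [add_one_mul] at this
    exact iff_of_false (by lia) fun h => hlt.ne h.1

variable {V : Type*} {E : V → V → ℕ} {O : V → ℕ}

/-- The multiplicities `E` with `C v` loops at each vertex `v`. They solve `Ω` once every variable
`e_{x,m}` is read off from the vertices labelling `x` and `m`. -/
noncomputable def withLoops (C : V → ℕ) (E : V → V → ℕ) (u v : V) : ℕ :=
  if u = v then C v else E u v

theorem sum_mul_withLoops [Fintype V] (C : V → ℕ) (k : V → ℕ) (v : V) :
    ∑ u, k u * withLoops C E u v = k v * C v + ∑ u ∈ Finset.univ.erase v, k u * E u v := by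
  rw [← Finset.add_sum_erase _ _ (Finset.mem_univ v), withLoops, if_pos rfl]
  congr 1
  exact Finset.sum_congr rfl fun u hu => by rw [withLoops, if_neg (Finset.ne_of_mem_erase hu)]

section LoopWeight

variable {L : Type*} [PartialOrder L] [OrderTop L] {K : L ↪o (V → ℕ)}

/-- A loop multiplicity for `v` exceeding the number of chips that `v` receives from the other
vertices during the whole game: one missing firing of `v` outweighs all of these chips. -/
noncomputable def loopWeight [Fintype V] (E : V → V → ℕ) (K : L ↪o (V → ℕ)) (v : V) : ℕ :=
  ∑ u, K ⊤ u * E u v + 1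

theorem sum_erase_lt_loopWeight [Fintype V] (a : L) (v : V) :
    ∑ u ∈ Finset.univ.erase v, K a u * E u v < loopWeight E K v := by
  refine Nat.lt_succ_of_le ((Finset.sum_le_sum_of_subset (Finset.erase_subset _ _)).trans ?_)
  gcongr
  exact K.monotone le_top _

end LoopWeight

variable {L : Type*} [Lattice L] [Fintype L] [BoundedOrder L] {K : L ↪o (V → ℕ)}

theorem IsShotEmbedding.exists_solvesE [Fintype V] (hK : IsShotEmbedding E O K) (hL : IsULD L)
    {lab : L → V} (hlab : ∀ m, MeetIrred m → ¬ IsSink E (lab m) ∧ IsFiringLabel K m (lab m))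
    {m : L} (hm : MeetIrred m) :
    ∃ w, SolvesE m w fun x => withLoops (loopWeight E K) E (lab x) (lab m) := by
  by_cases hU : Uset m = {⊥}
  · exact ⟨1, fun _ => le_rfl, fun hne => absurd hU hne⟩
  obtain ⟨hsink, hv⟩ := hlab m hm
  set v := lab m
  refine ⟨K m v * loopWeight E K v + (outDeg E v * (K m v + 1) - (O v + K m v * E v v)),
    solvesE_of_le_finsum_iff hL hm hU fun a ham => ?_⟩
  rw [hK.finsum_mnotAbove hL (fun m hm => (hlab m hm).2) (withLoops (loopWeight E K) E · v),
    sum_mul_withLoops, mul_add_tsub_le_iff (sum_erase_lt_loopWeight a v) (K.monotone ham v),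
    hK.exists_covBy_msetDiff_eq_iff hL hm hsink hv, and_congr_right_iff]
  intro ha
  rw [← Finset.add_sum_erase _ (fun u => K a u * E u v) (Finset.mem_univ v), ha, add_assoc]

theorem IsShotEmbedding.hasSolOmega [Finite V] (hK : IsShotEmbedding E O K) (hE : IsASM E)
    (hL : IsULD L) : HasSolOmega L := by
  have := Fintype.ofFinite V
  obtain ⟨-, s, hs, -, hsymm⟩ := hE
  have hlabel : ∀ m, ∃ v, MeetIrred m → ¬ IsSink E v ∧ IsFiringLabel K m v := fun m => by
    by_cases hm : MeetIrred m
    · obtain ⟨v, hv⟩ := hK.exists_isFiringLabel hm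
      exact ⟨v, fun _ => hv⟩
    · exact ⟨s, fun h => absurd h hm⟩
  choose lab hlab using hlabel
  have hne : ∀ m, MeetIrred m → lab m ≠ s := fun m hm h => (hlab m hm).1 (h ▸ hs)
  have hW : ∀ m, ∃ w, MeetIrred m →
      SolvesE m w fun x => withLoops (loopWeight E K) E (lab x) (lab m) := fun m => by
    by_cases hm : MeetIrred m
    · obtain ⟨w, hw⟩ := hK.exists_solvesE hL hlab hm
      exact ⟨w, fun _ => hw⟩
    · exact ⟨0, fun h => absurd h hm⟩
  choose W hW using hW
  refine ⟨W, fun x m => withLoops (loopWeight E K) E (lab x) (lab m), hW,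
    fun m₁ m₂ _ h₁₂ h₂₁ => ?_⟩
  by_cases h : lab m₁ = lab m₂
  · simp only [h]
  · simp only [withLoops, h, Ne.symm h, if_false]
    exact hsymm _ _ h (hne m₁ h₂₁.1) (hne m₂ h₁₂.1)

theorem MemLASM.hasSolOmega (hL : IsULD L) (h : MemLASM L) : HasSolOmega L := by
  obtain ⟨V, _, E, O, hE, hO, hgen⟩ := h
  obtain ⟨K, hK⟩ := hgen.exists_isShotEmbedding hO
  exact hK.hasSolOmega hE hL

end SandpileSolution

/-- a finite ULD lattice `L` belongs to `L(ASM)` if and only if the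
system `Ω` has a non-negative integer solution. -/
theorem stmt11 {L : Type*} [Lattice L] [Fintype L] [BoundedOrder L]
    (hULD : IsULD L) :
    MemLASM L ↔ HasSolOmega L :=
  ⟨MemLASM.hasSolOmega hULD, HasSolOmega.memLASM hULD⟩
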